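/- Typability characterizes checkers head normalization: (1) Correctness: if π ▷ Γ ⊢^k t : L then there is a checkers head normal form h and an evaluation t →hch^n h with n ≤ |π| whose number of interaction steps is ≤ k. (2) Completeness: if t →hch* h with h a checkers head normal form, then Γ ⊢^k t : L is derivable for some Γ, k, L. Consequently ⟦t⟧⊛ ≠ ∅ if and only if t is →hch-normalizable. -/

import Mathlib

set_option autoImplicit false

/-! ### Players -/

inductive Player : Type
  | white
  | black
deriving DecidableEq

/-- The opposite player. -/
def Player.op : Player → Player
  | .white => .black
  | .black => .white

/-- `gamma p q` is `0` if the players agree (silent) and `1` otherwise (interaction). -/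
def Player.gamma (p q : Player) : ℕ := if p = q then 0 else 1

/-! ### Ordinary λ-terms (de Bruijn representation) -/

inductive Lam : Type
  | var : ℕ → Lam
  | lam : Lam → Lam
  | app : Lam → Lam → Lam
deriving DecidableEq

namespace Lam

/-- Shift the free de Bruijn indices ≥ `d` by one. -/
def liftAt : Lam → ℕ → Lam
  | .var n, d => .var (if n < d then n else n + 1)
  | .lam t, d => .lam (t.liftAt (d + 1))
  | .app t u, d => .app (t.liftAt d) (u.liftAt d)

/-- Capture-avoiding substitution of `u` for the de Bruijn index `x`. -/
def subst : Lam → ℕ → Lam → Lam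
  | .var n, x, u => if n = x then u else if x < n then .var (n - 1) else .var n
  | .lam t, x, u => .lam (t.subst (x + 1) (u.liftAt 0))
  | .app t s, x, u => .app (t.subst x u) (s.subst x u)

end Lam

/-- Root β-rule: `(λx.t) u ↦ t[x:=u]`. -/
inductive LBetaRoot : Lam → Lam → Prop
  | beta (t u : Lam) : LBetaRoot (.app (.lam t) u) (t.subst 0 u)

/-- Root η-rule: `λx. t x ↦ t` with `x ∉ FV(t)` (enforced by the lifting). -/
inductive LEtaRoot : Lam → Lam → Prop
  | eta (t : Lam) : LEtaRoot (.lam (.app (t.liftAt 0) (.var 0))) t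

/-- Closure of a root relation under all contexts. -/
inductive LFull (R : Lam → Lam → Prop) : Lam → Lam → Prop
  | root {t u : Lam} : R t u → LFull R t u
  | lam {t u : Lam} : LFull R t u → LFull R (.lam t) (.lam u)
  | appL {t t' : Lam} (u : Lam) : LFull R t t' → LFull R (.app t u) (.app t' u)
  | appR (t : Lam) {u u' : Lam} : LFull R u u' → LFull R (.app t u) (.app t u')

/-- Closure under applicative spine contexts `⟨·⟩ t1 … tk`. -/
inductive LSpine (R : Lam → Lam → Prop) : Lam → Lam → Prop
  | root {t u : Lam} : R t u → LSpine R t u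
  | appL {t t' : Lam} (u : Lam) : LSpine R t t' → LSpine R (.app t u) (.app t' u)

/-- Closure under head contexts `λx1…xn.⟨·⟩ t1 … tk`. -/
inductive LHead (R : Lam → Lam → Prop) : Lam → Lam → Prop
  | spine {t u : Lam} : LSpine R t u → LHead R t u
  | lam {t u : Lam} : LHead R t u → LHead R (.lam t) (.lam u)

/-- β-reduction. -/
def LBeta : Lam → Lam → Prop := LFull LBetaRoot
/-- η-reduction. -/
def LEta : Lam → Lam → Prop := LFull LEtaRoot
/-- Head reduction. -/
def LHStep : Lam → Lam → Prop := LHead LBetaRoot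
/-- Multistep head reduction. -/
def LHSteps : Lam → Lam → Prop := Relation.ReflTransGen LHStep

/-- β-conversion (reflexive-symmetric-transitive closure of β-reduction). -/
def LBetaConv : Lam → Lam → Prop :=
  Relation.ReflTransGen (fun a b => LBeta a b ∨ LBeta b a)
/-- η-conversion. -/
def LEtaConv : Lam → Lam → Prop :=
  Relation.ReflTransGen (fun a b => LEta a b ∨ LEta b a)

/-- Head normal forms: no head step out of `t`. -/
def Lam.LHNF (t : Lam) : Prop := ∀ u, ¬ LHStep t u

/-- Head convergence: `t ⇓h`. -/
def Lam.HConv (t : Lam) : Prop := ∃ h, LHSteps t h ∧ h.LHNF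

/-- Ordinary contexts (one hole). -/
inductive LCtx : Type
  | hole : LCtx
  | lam : LCtx → LCtx
  | appL : LCtx → Lam → LCtx
  | appR : Lam → LCtx → LCtx

/-- Plugging (allowing variable capture). -/
def LCtx.fill : LCtx → Lam → Lam
  | .hole, t => t
  | .lam C, t => .lam (C.fill t)
  | .appL C u, t => .app (C.fill t) u
  | .appR s C, t => .app s (C.fill t)

/-- Head contextual preorder on λ-terms. -/
def CtxLe (t u : Lam) : Prop := ∀ C : LCtx, (C.fill t).HConv → (C.fill u).HConv

/-! ### Checkers terms -/

inductive CTerm : Type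
  | var : ℕ → CTerm
  | lam : Player → CTerm → CTerm
  | app : Player → CTerm → CTerm → CTerm
deriving DecidableEq

namespace CTerm

/-- Shift the free de Bruijn indices ≥ `d` by one. -/
def liftAt : CTerm → ℕ → CTerm
  | .var n, d => .var (if n < d then n else n + 1)
  | .lam p t, d => .lam p (t.liftAt (d + 1))
  | .app p t u, d => .app p (t.liftAt d) (u.liftAt d)

/-- Capture-avoiding substitution of `u` for the de Bruijn index `x`. -/
def subst : CTerm → ℕ → CTerm → CTerm
  | .var n, x, u => if n = x then u else if x < n then .var (n - 1) else .var n
  | .lam p t, x, u => .lam p (t.subst (x + 1) (u.liftAt 0))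
  | .app p t s, x, u => .app p (t.subst x u) (s.subst x u)

/-- The underlying ordinary λ-term of a checkers term. -/
def untag : CTerm → Lam
  | .var n => .var n
  | .lam _ t => .lam t.untag
  | .app _ t u => .app t.untag u.untag

end CTerm

/-- Player lifting: tag every abstraction and application with player `p`. -/
def Lam.tag : Lam → Player → CTerm
  | .var n, _ => .var n
  | .lam t, p => .lam p (t.tag p)
  | .app t u, p => .app p (t.tag p) (u.tag p)

/-- Silent β root rule: the abstraction and the application carry the same player. -/
inductive SilentRoot : CTerm → CTerm → Prop
  | beta (p : Player) (t u : CTerm) : SilentRoot (.app p (.lam p t) u) (t.subst 0 u)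

/-- Interaction β root rule: the application carries the opposite player of the abstraction. -/
inductive InterRoot : CTerm → CTerm → Prop
  | beta (p : Player) (t u : CTerm) : InterRoot (.app p.op (.lam p t) u) (t.subst 0 u)

/-- Closure of a root relation under all checkers contexts. -/
inductive CFull (R : CTerm → CTerm → Prop) : CTerm → CTerm → Prop
  | root {t u : CTerm} : R t u → CFull R t u
  | lam (p : Player) {t u : CTerm} : CFull R t u → CFull R (.lam p t) (.lam p u)
  | appL (p : Player) {t t' : CTerm} (u : CTerm) : CFull R t t' → CFull R (.app p t u) (.app p t' u)
  | appR (p : Player) (t : CTerm) {u u' : CTerm} : CFull R u u' → CFull R (.app p t u) (.app p t u')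

/-- Closure under applicative spine contexts `⟨·⟩ @_{q1} t1 … @_{qk} tk`. -/
inductive CSpine (R : CTerm → CTerm → Prop) : CTerm → CTerm → Prop
  | root {t u : CTerm} : R t u → CSpine R t u
  | appL (p : Player) {t t' : CTerm} (u : CTerm) : CSpine R t t' → CSpine R (.app p t u) (.app p t' u)

/-- Closure under checkers head contexts `λ_{p1}x1…λ_{pn}xn.⟨·⟩ @_{q1} t1 … @_{qk} tk`. -/
inductive CHead (R : CTerm → CTerm → Prop) : CTerm → CTerm → Prop
  | spine {t u : CTerm} : CSpine R t u → CHead R t u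
  | lam (p : Player) {t u : CTerm} : CHead R t u → CHead R (.lam p t) (.lam p u)

/-- Silent β-reduction `→τ`. -/
def StepTau : CTerm → CTerm → Prop := CFull SilentRoot
/-- Interaction β-reduction `→⊛`. -/
def StepInt : CTerm → CTerm → Prop := CFull InterRoot
/-- Checkers β-reduction `→βch`. -/
def StepBch (t u : CTerm) : Prop := StepTau t u ∨ StepInt t u

/-- Silent head reduction `→hτ`. -/
def HStepTau : CTerm → CTerm → Prop := CHead SilentRoot
/-- Interaction head reduction `→h⊛`. -/
def HStepInt : CTerm → CTerm → Prop := CHead InterRoot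
/-- Checkers head reduction `→hch`. -/
def HStepCh (t u : CTerm) : Prop := HStepTau t u ∨ HStepInt t u

/-- Checkers head normal form. -/
def CTerm.HNF (t : CTerm) : Prop := ∀ u, ¬ HStepCh t u

/-- `BigStep t k` means `t ⇓^k`: the (deterministic) checkers head evaluation of `t`
terminates and performs exactly `k` interaction steps. -/
inductive BigStep : CTerm → ℕ → Prop
  | nf {t : CTerm} : t.HNF → BigStep t 0
  | silent {t u : CTerm} {k : ℕ} : HStepTau t u → BigStep u k → BigStep t k
  | inter {t u : CTerm} {k : ℕ} : HStepInt t u → BigStep u k → BigStep t (k + 1)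

/-- `HRed t n i u`: a checkers head reduction sequence from `t` to `u` of length `n`
containing exactly `i` interaction steps. -/
inductive HRed : CTerm → ℕ → ℕ → CTerm → Prop
  | refl (t : CTerm) : HRed t 0 0 t
  | silent {t u s : CTerm} {n i : ℕ} : HStepTau t u → HRed u n i s → HRed t (n + 1) i s
  | inter {t u s : CTerm} {n i : ℕ} : HStepInt t u → HRed u n i s → HRed t (n + 1) (i + 1) s

/-- Checkers contexts (one hole). -/
inductive CCtx : Type
  | hole : CCtx
  | lam : Player → CCtx → CCtx
  | appL : Player → CCtx → CTerm → CCtx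
  | appR : Player → CTerm → CCtx → CCtx

/-- Plugging (allowing variable capture). -/
def CCtx.fill : CCtx → CTerm → CTerm
  | .hole, t => t
  | .lam p C, t => .lam p (C.fill t)
  | .appL p C u, t => .app p (C.fill t) u
  | .appR p s C, t => .app p s (C.fill t)

/-- Player lifting of ordinary contexts. -/
def LCtx.tag : LCtx → Player → CCtx
  | .hole, _ => .hole
  | .lam C, p => .lam p (C.tag p)
  | .appL C u, p => .appL p (C.tag p) (u.tag p)
  | .appR s C, p => .appR p (s.tag p) (C.tag p)

/-- Checkers interaction preorder `≼ctx⊛` on checkers terms. -/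
def IntCtxLe (t u : CTerm) : Prop :=
  ∀ (C : CCtx) (k : ℕ), BigStep (C.fill t) k → BigStep (C.fill u) k

/-- Checkers interaction improvement `≼imp⊛` on checkers terms. -/
def ImpCtxLe (t u : CTerm) : Prop :=
  ∀ (C : CCtx) (k : ℕ), BigStep (C.fill t) k → ∃ k', k' ≤ k ∧ BigStep (C.fill u) k'

/-- Interaction preorder `⊑int` on ordinary λ-terms, via black lifting. -/
def IntLe (t u : Lam) : Prop := IntCtxLe (t.tag .black) (u.tag .black)

/-- Interaction improvement `⊑int·imp` on ordinary λ-terms, via black lifting. -/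
def ImpLe (t u : Lam) : Prop := ImpCtxLe (t.tag .black) (u.tag .black)

/-- Interaction equivalence `≡int`. -/
def IntEq (t u : Lam) : Prop := IntLe t u ∧ IntLe u t

/-- Silent conversion `=τ`: reflexive-symmetric-transitive closure of `→τ`. -/
def SilentConv : CTerm → CTerm → Prop :=
  Relation.ReflTransGen (fun a b => StepTau a b ∨ StepTau b a)


/-! ### Checkers multi types -/

/-- Linear types: an atom `X` and arrows `M →_{p,q} L`, where a multi type `M`
is a finite multiset of linear types (syntactically represented as a list). -/
inductive LType : Type
  | atom : LType
  | arrow : List LType → Player → Player → LType → LType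

/-- Type environments: a multi type for every de Bruijn index. -/
abbrev TEnv : Type := ℕ → Multiset LType

/-- The empty type environment. -/
def TEnv.zero : TEnv := fun _ => 0

/-- Pointwise multiset union of type environments. -/
def TEnv.add (Γ Δ : TEnv) : TEnv := fun n => Γ n + Δ n

/-- The environment assigning `[L]` to `x` and `0` elsewhere. -/
def TEnv.single (x : ℕ) (L : LType) : TEnv := fun n => if n = x then {L} else 0

/-- Extend an environment with a multi type for the freshly bound de Bruijn index `0`. -/
def TEnv.cons (M : Multiset LType) (Γ : TEnv) : TEnv := fun n =>
  match n with
  | 0 => M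
  | n + 1 => Γ n

mutual
  /-- Type derivations `π ▷ Γ ⊢^k t : L` of the checkers multi type system. -/
  inductive Deriv : TEnv → ℕ → CTerm → LType → Type
    | ax (x : ℕ) (L : LType) : Deriv (TEnv.single x L) 0 (.var x) L
    | lam {Γ : TEnv} {k : ℕ} {t : CTerm} {L : LType} (p q : Player) (M : List LType) :
        Deriv (TEnv.cons (Multiset.ofList M) Γ) k t L →
        Deriv Γ k (.lam p t) (.arrow M p q L)
    | app {Γ Δ : TEnv} {k₁ k₂ : ℕ} {t u : CTerm} {M : List LType} {p q : Player} {L : LType} :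
        Deriv Γ k₁ t (.arrow M p q L) → DerivM Δ k₂ u M →
        Deriv (TEnv.add Γ Δ) (k₁ + k₂ + Player.gamma p q) (.app q t u) L
  /-- Derivations `Γ ⊢^k t : M` of a multi type (the `many` rule). -/
  inductive DerivM : TEnv → ℕ → CTerm → List LType → Type
    | nil (t : CTerm) : DerivM TEnv.zero 0 t []
    | cons {Γ Δ : TEnv} {k k' : ℕ} {t : CTerm} {L : LType} {M : List LType} :
        Deriv Γ k t L → DerivM Δ k' t M → DerivM (TEnv.add Γ Δ) (k + k') t (L :: M)
end

mutual
  /-- The (applicative) size `|π|` of a derivation: its number of `@` rules. -/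
  def Deriv.size {Γ : TEnv} {k : ℕ} {t : CTerm} {L : LType} : Deriv Γ k t L → ℕ
    | .ax _ _ => 0
    | .lam _ _ _ π => Deriv.size π
    | .app π μ => Deriv.size π + DerivM.size μ + 1
  /-- Size of a multi-type derivation. -/
  def DerivM.size {Γ : TEnv} {k : ℕ} {t : CTerm} {M : List LType} : DerivM Γ k t M → ℕ
    | .nil _ => 0
    | .cons π μ => Deriv.size π + DerivM.size μ
end

/-- Typability `Γ ⊢^k t : L`. -/
def TJ (Γ : TEnv) (k : ℕ) (t : CTerm) (L : LType) : Prop := Nonempty (Deriv Γ k t L)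

/-- Checkers relational interpretation `⟦t⟧⊛ = {(Γ, k, L) | Γ ⊢^k t : L}`. -/
def CSem (t : CTerm) : Set (TEnv × ℕ × LType) := {x | TJ x.1 x.2.1 t x.2.2}

/-- Black type preorder `⊑•type` on ordinary λ-terms. -/
def BTypeLe (t u : Lam) : Prop := CSem (t.tag .black) ⊆ CSem (u.tag .black)

/-! ### Tight typings -/

/-- All arrows occurring in a linear type are silent (`p = q`). -/
inductive AllSilent : LType → Prop
  | atom : AllSilent .atom
  | arrow {M : List LType} {p : Player} {L : LType} :
      (∀ L' ∈ M, AllSilent L') → AllSilent L → AllSilent (.arrow M p p L)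

/-- The number of nonempty multi types occurring in a linear type. -/
def LType.neCount : LType → ℕ
  | .atom => 0
  | .arrow M _ _ L =>
      min M.length 1 + (M.attach.map fun x => LType.neCount x.1).sum + LType.neCount L
decreasing_by
  · have := List.sizeOf_lt_of_mem x.2
    simp only [LType.arrow.sizeOf_spec]
    omega
  · simp only [LType.arrow.sizeOf_spec]
    omega

/-- The number of nonempty multi types occurring in a multi type (counting itself). -/
def mNeCount (m : Multiset LType) : ℕ :=
  min (Multiset.card m) 1 + (m.map LType.neCount).sum

/-- A typing `(Γ, L)` is tight when all the multi types occurring in `Γ` and `L`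
are empty except for exactly one, and all arrows occurring in `(Γ, L)` are silent. -/
def Tight (Γ : TEnv) (L : LType) : Prop :=
  AllSilent L ∧ (∀ n : ℕ, ∀ L' ∈ Γ n, AllSilent L') ∧
    ∃ S : Finset ℕ, (∀ n : ℕ, n ∉ S → Γ n = 0) ∧
      (∑ n ∈ S, mNeCount (Γ n)) + LType.neCount L = 1

/-! ### A propositional presentation of typability, recursive on terms -/

/-- The `many` rule over an arbitrary predicate. -/
inductive Many (P : TEnv → ℕ → ℕ → LType → Prop) : TEnv → ℕ → ℕ → List LType → Prop
  | nil : Many P 0 0 0 []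
  | cons {Γ Δ : TEnv} {k k' s s' : ℕ} {L : LType} {M : List LType} :
      P Γ k s L → Many P Δ k' s' M → Many P (Γ + Δ) (k + k') (s + s') (L :: M)

/-- Typability with size, by recursion on the term. -/
def Ty : CTerm → TEnv → ℕ → ℕ → LType → Prop
  | .var x, Γ, k, s, L => Γ = TEnv.single x L ∧ k = 0 ∧ s = 0
  | .lam p t, Γ, k, s, L => ∃ (M : List LType) (q : Player) (L' : LType),
      L = .arrow M p q L' ∧ Ty t (TEnv.cons (Multiset.ofList M) Γ) k s L'
  | .app q t u, Γ, k, s, L => ∃ (Γ₁ Γ₂ : TEnv) (k₁ k₂ s₁ s₂ : ℕ) (M : List LType) (p : Player),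
      Ty t Γ₁ k₁ s₁ (.arrow M p q L) ∧ Many (Ty u) Γ₂ k₂ s₂ M ∧ Γ = Γ₁ + Γ₂ ∧
      k = k₁ + k₂ + Player.gamma p q ∧ s = s₁ + s₂ + 1

mutual
theorem Deriv.toTy {Γ : TEnv} {k : ℕ} {t : CTerm} {L : LType} :
    (π : Deriv Γ k t L) → Ty t Γ k π.size L
  | .ax x L => by simp [Ty, Deriv.size]
  | .lam p q M π => by
      simp only [Ty, Deriv.size]
      exact ⟨M, q, _, rfl, Deriv.toTy π⟩
  | .app π μ => by
      simp only [Ty, Deriv.size]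
      exact ⟨_, _, _, _, _, _, _, _, Deriv.toTy π, DerivM.toMany μ, rfl, rfl, rfl⟩
theorem DerivM.toMany {Γ : TEnv} {k : ℕ} {t : CTerm} {M : List LType} :
    (π : DerivM Γ k t M) → Many (Ty t) Γ k π.size M
  | .nil t => by
      simp only [DerivM.size]
      exact Many.nil
  | .cons π μ => by
      simp only [DerivM.size]
      exact Many.cons (Deriv.toTy π) (DerivM.toMany μ)
end

theorem Many.toDerivM {t : CTerm}
    (ih : ∀ Γ k s L, Ty t Γ k s L → Nonempty (Deriv Γ k t L))
    {Γ : TEnv} {k s : ℕ} {M : List LType} (h : Many (Ty t) Γ k s M) :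
    Nonempty (DerivM Γ k t M) := by
  induction h with
  | nil => exact ⟨DerivM.nil t⟩
  | cons h _ ih2 =>
    obtain ⟨a⟩ := ih _ _ _ _ h
    obtain ⟨b⟩ := ih2
    exact ⟨DerivM.cons a b⟩

theorem Ty.toDeriv (t : CTerm) : ∀ Γ k s L, Ty t Γ k s L → Nonempty (Deriv Γ k t L) := by
  induction t with
  | var x =>
    rintro Γ k s L ⟨rfl, rfl, rfl⟩
    exact ⟨Deriv.ax x L⟩
  | lam p t ih =>
    rintro Γ k s L ⟨M, q, L', rfl, h⟩
    obtain ⟨a⟩ := ih _ _ _ _ h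
    exact ⟨Deriv.lam p q M a⟩
  | app q t u iht ihu =>
    rintro Γ k s L ⟨Γ₁, Γ₂, k₁, k₂, s₁, s₂, M, p, h1, h2, rfl, rfl, rfl⟩
    obtain ⟨a⟩ := iht _ _ _ _ h1
    obtain ⟨b⟩ := h2.toDerivM ihu
    exact ⟨Deriv.app a b⟩

/-! ### Structural lemmas on `Many` -/

theorem Many.mono {P Q : TEnv → ℕ → ℕ → LType → Prop} {f : TEnv → TEnv}
    (f0 : f 0 = 0) (fadd : ∀ Γ Δ, f (Γ + Δ) = f Γ + f Δ)
    (hPQ : ∀ Γ k s L, P Γ k s L → Q (f Γ) k s L)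
    {Γ : TEnv} {k s : ℕ} {M : List LType} (h : Many P Γ k s M) : Many Q (f Γ) k s M := by
  induction h with
  | nil => rw [f0]; exact Many.nil
  | cons h _ ih => rw [fadd]; exact Many.cons (hPQ _ _ _ _ h) ih

theorem Many.append {P : TEnv → ℕ → ℕ → LType → Prop} {Γ Δ : TEnv} {k k' s s' : ℕ}
    {M N : List LType} (h : Many P Γ k s M) (h' : Many P Δ k' s' N) :
    Many P (Γ + Δ) (k + k') (s + s') (M ++ N) := by
  induction h with
  | nil => simpa using h'
  | cons h _ ih =>
    rw [add_assoc, add_assoc, add_assoc]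
    exact Many.cons h ih

theorem Many.split {P : TEnv → ℕ → ℕ → LType → Prop} {M N : List LType} :
    ∀ {Γ : TEnv} {k s : ℕ}, Many P Γ k s (M ++ N) →
    ∃ Γ₁ Γ₂ k₁ k₂ s₁ s₂, Many P Γ₁ k₁ s₁ M ∧ Many P Γ₂ k₂ s₂ N ∧ Γ = Γ₁ + Γ₂ ∧
      k = k₁ + k₂ ∧ s = s₁ + s₂ := by
  induction M with
  | nil =>
    intro Γ k s h
    exact ⟨0, Γ, 0, k, 0, s, Many.nil, h, by simp, by simp, by simp⟩
  | cons L M ih =>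
    intro Γ k s h
    cases h with
    | cons h1 h2 =>
      obtain ⟨Γ₁, Γ₂, k₁, k₂, s₁, s₂, h3, h4, rfl, rfl, rfl⟩ := ih h2
      exact ⟨_, _, _, _, _, _, Many.cons h1 h3, h4, by rw [add_assoc], by rw [add_assoc],
        by rw [add_assoc]⟩

theorem Many.perm {P : TEnv → ℕ → ℕ → LType → Prop} {M N : List LType} (hp : M.Perm N) :
    ∀ {Γ : TEnv} {k s : ℕ}, Many P Γ k s M → Many P Γ k s N := by
  induction hp with
  | nil => exact fun h => h
  | cons L _ ih =>
    intro Γ k s h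
    cases h with
    | cons h1 h2 => exact Many.cons h1 (ih h2)
  | swap L L' M =>
    intro Γ k s h
    cases h with
    | cons h1 h2 =>
      cases h2 with
      | cons h2 h3 =>
        have := Many.cons h2 (Many.cons h1 h3)
        convert this using 1
        · exact add_left_comm _ _ _
        · omega
        · omega
  | trans _ _ ih1 ih2 => exact fun h => ih2 (ih1 h)

/-- `Many` on multisets. -/
def MM (P : TEnv → ℕ → ℕ → LType → Prop) (Γ : TEnv) (k s : ℕ) (m : Multiset LType) : Prop :=
  ∃ l : List LType, Multiset.ofList l = m ∧ Many P Γ k s l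

theorem MM_coe {P : TEnv → ℕ → ℕ → LType → Prop} {Γ : TEnv} {k s : ℕ} {l : List LType} :
    MM P Γ k s (Multiset.ofList l) ↔ Many P Γ k s l := by
  constructor
  · rintro ⟨l', h, h'⟩
    exact h'.perm (Multiset.coe_eq_coe.1 h)
  · exact fun h => ⟨l, rfl, h⟩

theorem MM_zero {P : TEnv → ℕ → ℕ → LType → Prop} {Γ : TEnv} {k s : ℕ} :
    MM P Γ k s 0 ↔ Γ = 0 ∧ k = 0 ∧ s = 0 := by
  rw [← Multiset.coe_nil, MM_coe]
  constructor
  · intro h; cases h; simp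
  · rintro ⟨rfl, rfl, rfl⟩; exact Many.nil

theorem MM_single {P : TEnv → ℕ → ℕ → LType → Prop} {Γ : TEnv} {k s : ℕ} {L : LType} :
    MM P Γ k s {L} ↔ P Γ k s L := by
  rw [← Multiset.coe_singleton, MM_coe]
  constructor
  · intro h
    cases h with
    | cons h1 h2 => cases h2; simpa using h1
  · intro h; simpa using Many.cons h Many.nil

theorem MM_add {P : TEnv → ℕ → ℕ → LType → Prop} {Γ : TEnv} {k s : ℕ} {m n : Multiset LType} :
    MM P Γ k s (m + n) ↔ ∃ Γ₁ Γ₂ k₁ k₂ s₁ s₂, MM P Γ₁ k₁ s₁ m ∧ MM P Γ₂ k₂ s₂ n ∧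
      Γ = Γ₁ + Γ₂ ∧ k = k₁ + k₂ ∧ s = s₁ + s₂ := by
  induction m using Quotient.inductionOn with | _ M => ?_
  induction n using Quotient.inductionOn with | _ N => ?_
  simp only [Multiset.quot_mk_to_coe, Multiset.coe_add, MM_coe]
  constructor
  · exact Many.split
  · rintro ⟨Γ₁, Γ₂, k₁, k₂, s₁, s₂, h3, h4, rfl, rfl, rfl⟩
    exact h3.append h4

/-! ### Lifting -/

/-- Drop index `d` from an environment. -/
def rem (d : ℕ) (Γ : TEnv) : TEnv := fun n => Γ (if n < d then n else n + 1)

/-- Insert an empty slot at index `d`. -/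
def ins (d : ℕ) (Γ : TEnv) : TEnv := fun n => if n < d then Γ n else if n = d then 0 else Γ (n - 1)

theorem rem_ins (d : ℕ) (Γ : TEnv) : rem d (ins d Γ) = Γ := by
  funext n; simp only [rem, ins]; split_ifs <;> first | rfl | omega

theorem ins_rem {d : ℕ} {Γ : TEnv} (h : Γ d = 0) : ins d (rem d Γ) = Γ := by
  funext n; simp only [rem, ins]
  split_ifs with h1 h2 h3
  · rfl
  · rw [h2, h]
  · omega
  · congr 1; omega

theorem ins_self (d : ℕ) (Γ : TEnv) : ins d Γ d = 0 := by simp [ins]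

theorem ins_zero (d : ℕ) : ins d 0 = 0 := by funext n; simp [ins]

theorem ins_add (d : ℕ) (Γ Δ : TEnv) : ins d (Γ + Δ) = ins d Γ + ins d Δ := by
  funext n; simp only [ins, Pi.add_apply]; split_ifs <;> simp

theorem rem_add (d : ℕ) (Γ Δ : TEnv) : rem d (Γ + Δ) = rem d Γ + rem d Δ := rfl

theorem ins_single (d n : ℕ) (L : LType) :
    ins d (TEnv.single n L) = TEnv.single (if n < d then n else n + 1) L := by
  funext m; simp only [ins, TEnv.single]
  split_ifs <;> first | rfl | omega

theorem ins_cons (d : ℕ) (M : Multiset LType) (Γ : TEnv) :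
    ins (d + 1) (TEnv.cons M Γ) = TEnv.cons M (ins d Γ) := by
  funext n
  rcases n with _ | n
  · simp [ins, TEnv.cons]
  · rcases n with _ | n
    · simp only [ins, TEnv.cons]; split_ifs <;> first | rfl | omega
    · simp only [ins, TEnv.cons]; split_ifs <;> first | rfl | omega

theorem rem_cons (d : ℕ) (M : Multiset LType) (Γ : TEnv) :
    rem (d + 1) (TEnv.cons M Γ) = TEnv.cons M (rem d Γ) := by
  funext n
  rcases n with _ | n
  · simp [rem, TEnv.cons]
  · simp only [rem, TEnv.cons]; split_ifs <;> first | rfl | omega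

theorem cons_add (M N : Multiset LType) (Γ Δ : TEnv) :
    TEnv.cons (M + N) (Γ + Δ) = TEnv.cons M Γ + TEnv.cons N Δ := by
  funext n; cases n <;> rfl

theorem cons_rem (Γ : TEnv) : TEnv.cons (Γ 0) (rem 0 Γ) = Γ := by
  funext n; cases n <;> rfl

theorem rem0_cons (M : Multiset LType) (Γ : TEnv) : rem 0 (TEnv.cons M Γ) = Γ := rfl

theorem cons_zero_eq_ins (Γ : TEnv) : TEnv.cons 0 Γ = ins 0 Γ := by
  funext n; cases n <;> rfl

theorem Ty_lift (t : CTerm) : ∀ (d : ℕ) (Γ : TEnv) (k s : ℕ) (L : LType),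
    Ty t Γ k s L → Ty (t.liftAt d) (ins d Γ) k s L := by
  induction t with
  | var x =>
    rintro d Γ k s L ⟨rfl, rfl, rfl⟩
    exact ⟨ins_single _ _ _, rfl, rfl⟩
  | lam p t ih =>
    rintro d Γ k s L ⟨M, q, L', rfl, h⟩
    refine ⟨M, q, L', rfl, ?_⟩
    rw [← ins_cons]
    exact ih _ _ _ _ _ h
  | app q t u iht ihu =>
    rintro d Γ k s L ⟨Γ₁, Γ₂, k₁, k₂, s₁, s₂, M, p, h1, h2, rfl, rfl, rfl⟩
    exact ⟨_, _, _, _, _, _, M, p, iht d _ _ _ _ h1,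
      h2.mono (ins_zero d) (ins_add d) (ihu d), ins_add _ _ _, rfl, rfl⟩

theorem Many.unlift {P Q : TEnv → ℕ → ℕ → LType → Prop} {d : ℕ}
    (hPQ : ∀ Γ k s L, P Γ k s L → Γ d = 0 ∧ Q (rem d Γ) k s L)
    {Γ : TEnv} {k s : ℕ} {M : List LType} (h : Many P Γ k s M) :
    Γ d = 0 ∧ Many Q (rem d Γ) k s M := by
  induction h with
  | nil => exact ⟨rfl, Many.nil⟩
  | cons h _ ih =>
    obtain ⟨a, b⟩ := hPQ _ _ _ _ h
    exact ⟨by rw [Pi.add_apply, a, ih.1, add_zero], Many.cons b ih.2⟩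

theorem Ty_unlift (t : CTerm) : ∀ (d : ℕ) (Γ : TEnv) (k s : ℕ) (L : LType),
    Ty (t.liftAt d) Γ k s L → Γ d = 0 ∧ Ty t (rem d Γ) k s L := by
  induction t with
  | var x =>
    rintro d Γ k s L ⟨rfl, rfl, rfl⟩
    rw [← ins_single]
    exact ⟨ins_self _ _, rem_ins _ _, rfl, rfl⟩
  | lam p t ih =>
    rintro d Γ k s L ⟨M, q, L', rfl, h⟩
    obtain ⟨a, b⟩ := ih _ _ _ _ _ h
    rw [rem_cons] at b
    exact ⟨a, M, q, L', rfl, b⟩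
  | app q t u iht ihu =>
    rintro d Γ k s L ⟨Γ₁, Γ₂, k₁, k₂, s₁, s₂, M, p, h1, h2, rfl, rfl, rfl⟩
    obtain ⟨a, b⟩ := iht d _ _ _ _ h1
    obtain ⟨a', b'⟩ := h2.unlift (ihu d)
    exact ⟨by rw [Pi.add_apply, a, a', add_zero], _, _, _, _, _, _, M, p, b, b', rfl, rfl, rfl⟩

/-! ### Substitution and anti-substitution -/

/-- A typing of `t[x:=u]` split into a typing of `t` (satisfying `P`) and of `u`. -/
def SubTy {α : Type} (P : TEnv → ℕ → ℕ → α → Prop) (U : TEnv → ℕ → ℕ → LType → Prop) (x : ℕ)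
    (Γ : TEnv) (k s : ℕ) (a : α) : Prop :=
  ∃ Γ₁ Γ₂ k₁ k₂ s₁ s₂, P Γ₁ k₁ s₁ a ∧ MM U Γ₂ k₂ s₂ (Γ₁ x) ∧
    Γ = rem x Γ₁ + Γ₂ ∧ k = k₁ + k₂ ∧ s = s₁ + s₂

theorem Many_SubTy {P U : TEnv → ℕ → ℕ → LType → Prop} {x : ℕ} {M : List LType} :
    ∀ {Γ : TEnv} {k s : ℕ}, Many (SubTy P U x) Γ k s M ↔ SubTy (Many P) U x Γ k s M := by
  induction M with
  | nil =>
    intro Γ k s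
    constructor
    · intro h
      cases h
      exact ⟨0, 0, 0, 0, 0, 0, Many.nil, MM_zero.2 ⟨rfl, rfl, rfl⟩, rfl, rfl, rfl⟩
    · rintro ⟨Γ₁, Γ₂, k₁, k₂, s₁, s₂, h1, h2, rfl, rfl, rfl⟩
      cases h1
      obtain ⟨rfl, rfl, rfl⟩ := MM_zero.1 h2
      exact Many.nil
  | cons L M ih =>
    intro Γ k s
    constructor
    · intro h
      cases h with
      | cons h1 h2 =>
        obtain ⟨Γ₁, Γ₂, k₁, k₂, s₁, s₂, h1, h3, rfl, rfl, rfl⟩ := h1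
        obtain ⟨Γ₁', Γ₂', k₁', k₂', s₁', s₂', h5, h4, rfl, rfl, rfl⟩ := ih.1 h2
        refine ⟨_, _, _, _, _, _, Many.cons h1 h5,
          MM_add.2 ⟨_, _, _, _, _, _, h3, h4, rfl, rfl, rfl⟩, ?_, ?_, ?_⟩
        · rw [rem_add]; exact add_add_add_comm _ _ _ _
        · omega
        · omega
    · rintro ⟨Γ₁, Γ₂, k₁, k₂, s₁, s₂, h1, h2, rfl, rfl, rfl⟩
      cases h1 with
      | cons h3 h4 =>
        obtain ⟨Γ₁', Γ₂', k₁', k₂', s₁', s₂', h5, h6, rfl, rfl, rfl⟩ := MM_add.1 h2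
        have := Many.cons (P := SubTy P U x) ⟨_, _, _, _, _, _, h3, h5, rfl, rfl, rfl⟩
          (ih.2 ⟨_, _, _, _, _, _, h4, h6, rfl, rfl, rfl⟩)
        convert this using 1
        · rw [rem_add]; exact add_add_add_comm _ _ _ _
        · omega
        · omega

theorem rem_single_self (x : ℕ) (L : LType) : rem x (TEnv.single x L) = 0 := by
  funext m; simp only [rem, TEnv.single, Pi.zero_apply]
  split_ifs <;> first | rfl | omega

theorem rem_single_ne (x n : ℕ) (L : LType) (h : n ≠ x) :
    rem x (TEnv.single n L) = TEnv.single (if x < n then n - 1 else n) L := by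
  funext m; simp only [rem, TEnv.single]
  split_ifs <;> first | rfl | omega

theorem MM_lift {u : CTerm} {d : ℕ} {Γ : TEnv} {k s : ℕ} {m : Multiset LType}
    (h : MM (Ty u) Γ k s m) : MM (Ty (u.liftAt d)) (ins d Γ) k s m := by
  obtain ⟨l, hl, h⟩ := h
  exact ⟨l, hl, h.mono (ins_zero d) (ins_add d) (Ty_lift u d)⟩

theorem MM_unlift {u : CTerm} {d : ℕ} {Γ : TEnv} {k s : ℕ} {m : Multiset LType}
    (h : MM (Ty (u.liftAt d)) Γ k s m) : Γ d = 0 ∧ MM (Ty u) (rem d Γ) k s m := by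
  obtain ⟨l, hl, h⟩ := h
  obtain ⟨a, b⟩ := h.unlift (Ty_unlift u d)
  exact ⟨a, l, hl, b⟩

theorem Ty_subst (t : CTerm) : ∀ (x : ℕ) (u : CTerm) (Γ : TEnv) (k s : ℕ) (L : LType),
    Ty (t.subst x u) Γ k s L ↔ SubTy (Ty t) (Ty u) x Γ k s L := by
  induction t with
  | var n =>
    intro x u Γ k s L
    by_cases hn : n = x
    · subst hn
      have e : (CTerm.var n).subst n u = u := by simp [CTerm.subst]
      rw [e]
      constructor
      · intro h
        refine ⟨TEnv.single n L, Γ, 0, k, 0, s, ⟨rfl, rfl, rfl⟩, ?_, ?_, by simp, by simp⟩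
        · simpa [TEnv.single, MM_single] using h
        · rw [rem_single_self, zero_add]
      · rintro ⟨Γ₁, Γ₂, k₁, k₂, s₁, s₂, ⟨rfl, rfl, rfl⟩, h2, rfl, rfl, rfl⟩
        rw [rem_single_self, zero_add, zero_add, zero_add]
        simpa [TEnv.single, MM_single] using h2
    · have e : (CTerm.var n).subst x u = .var (if x < n then n - 1 else n) := by
        simp only [CTerm.subst, if_neg hn]; split_ifs <;> rfl
      have e' : TEnv.single n L x = 0 := by
        simp only [TEnv.single]; rw [if_neg (fun h => hn h.symm)]
      rw [e]
      constructor
      · rintro ⟨rfl, rfl, rfl⟩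
        refine ⟨TEnv.single n L, 0, 0, 0, 0, 0, ⟨rfl, rfl, rfl⟩, ?_, ?_, rfl, rfl⟩
        · rw [e']; exact MM_zero.2 ⟨rfl, rfl, rfl⟩
        · rw [rem_single_ne _ _ _ hn, add_zero]
      · rintro ⟨Γ₁, Γ₂, k₁, k₂, s₁, s₂, ⟨rfl, rfl, rfl⟩, h2, rfl, rfl, rfl⟩
        rw [e'] at h2
        obtain ⟨rfl, rfl, rfl⟩ := MM_zero.1 h2
        exact ⟨by rw [rem_single_ne _ _ _ hn, add_zero], rfl, rfl⟩
  | lam p t ih =>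
    intro x u Γ k s L
    constructor
    · rintro ⟨M, q, L', rfl, h⟩
      obtain ⟨Γ₁, Γ₂, k₁, k₂, s₁, s₂, h1, h2, h3, rfl, rfl⟩ := (ih _ _ _ _ _ _).1 h
      obtain ⟨h4, h5⟩ := MM_unlift h2
      have e0 : Γ₁ 0 = Multiset.ofList M := by
        have := congrFun h3 0
        simp only [TEnv.cons, Pi.add_apply, h4, add_zero, rem] at this
        simpa using this.symm
      refine ⟨rem 0 Γ₁, rem 0 Γ₂, k₁, k₂, s₁, s₂, ⟨M, q, L', rfl, ?_⟩, h5, ?_, rfl, rfl⟩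
      · rw [← e0, cons_rem]; exact h1
      · rw [← rem0_cons M Γ, h3, rem_add]
        congr 1
        rw [← cons_rem Γ₁, rem_cons, rem0_cons, rem0_cons]
    · rintro ⟨Γ₁, Γ₂, k₁, k₂, s₁, s₂, ⟨M, q, L', rfl, h1⟩, h2, rfl, rfl, rfl⟩
      refine ⟨M, q, L', rfl, (ih _ _ _ _ _ _).2
        ⟨_, _, _, _, _, _, h1, MM_lift (d := 0) h2, ?_, rfl, rfl⟩⟩
      rw [rem_cons, ← cons_zero_eq_ins, ← cons_add, add_zero]
  | app q t r iht ihr =>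
    intro x u Γ k s L
    have er : Ty (r.subst x u) = SubTy (Ty r) (Ty u) x := by
      funext a b c d; exact propext (ihr _ _ _ _ _ _)
    constructor
    · rintro ⟨Γ₁, Γ₂, k₁, k₂, s₁, s₂, M, p, h1, h2, rfl, rfl, rfl⟩
      rw [er, Many_SubTy] at h2
      obtain ⟨Δ₁, Δ₂, l₁, l₂, r₁, r₂, h5, h3, rfl, rfl, rfl⟩ := (iht _ _ _ _ _ _).1 h1
      obtain ⟨Δ₁', Δ₂', l₁', l₂', r₁', r₂', h6, h4, rfl, rfl, rfl⟩ := h2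
      refine ⟨Δ₁ + Δ₁', Δ₂ + Δ₂', _, _, _, _,
        ⟨_, _, _, _, _, _, _, _, h5, h6, rfl, rfl, rfl⟩,
        MM_add.2 ⟨_, _, _, _, _, _, h3, h4, rfl, rfl, rfl⟩, ?_, ?_, ?_⟩
      · rw [rem_add]; exact add_add_add_comm _ _ _ _
      · omega
      · omega
    · rintro ⟨Γ₁, Γ₂, k₁, k₂, s₁, s₂, ⟨Δ₁, Δ₁', l₁, l₁', r₁, r₁', M, p, h1, h2, rfl, rfl, rfl⟩,
        h, rfl, rfl, rfl⟩
      obtain ⟨Δ₂, Δ₂', l₂, l₂', r₂, r₂', h3, h4, rfl, rfl, rfl⟩ := MM_add.1 h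
      refine ⟨rem x Δ₁ + Δ₂, rem x Δ₁' + Δ₂', l₁ + l₂, l₁' + l₂', r₁ + r₂, r₁' + r₂', M, p,
        (iht _ _ _ _ _ _).2 ⟨_, _, _, _, _, _, h1, h3, rfl, rfl, rfl⟩, ?_, ?_, ?_, ?_⟩
      · rw [er, Many_SubTy]
        exact ⟨_, _, _, _, _, _, h2, h4, rfl, rfl, rfl⟩
      · rw [rem_add]; exact add_add_add_comm _ _ _ _
      · omega
      · omega

/-! ### Subject reduction and expansion -/

/-- `R` steps change typings by `g` interactions and exactly one application. -/
def Good (g : ℕ) (R : CTerm → CTerm → Prop) : Prop :=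
  ∀ t u, R t u → ∀ Γ k s L, Ty t Γ k s L ↔ ∃ k₀ s₀, k = k₀ + g ∧ s = s₀ + 1 ∧ Ty u Γ k₀ s₀ L

theorem Ty_beta (p q : Player) (t u : CTerm) (Γ : TEnv) (k s : ℕ) (L : LType) :
    Ty (.app q (.lam p t) u) Γ k s L ↔
      ∃ k₀ s₀, k = k₀ + Player.gamma p q ∧ s = s₀ + 1 ∧ Ty (t.subst 0 u) Γ k₀ s₀ L := by
  simp only [Ty_subst]
  constructor
  · rintro ⟨Γ₁, Γ₂, k₁, k₂, s₁, s₂, M, p', ⟨M', q', L', e, h1⟩, h2, rfl, rfl, rfl⟩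
    injection e with e1 e2 e3 e4
    subst e1 e2 e3 e4
    exact ⟨k₁ + k₂, s₁ + s₂, rfl, rfl, _, _, _, _, _, _, h1, MM_coe.2 h2, rfl, rfl, rfl⟩
  · rintro ⟨_, _, rfl, rfl, Γ₁, Γ₂, k₁, k₂, s₁, s₂, h1, ⟨l, hl, h2⟩, rfl, rfl, rfl⟩
    refine ⟨rem 0 Γ₁, Γ₂, k₁, k₂, s₁, s₂, l, p, ⟨l, q, L, rfl, ?_⟩, h2, rfl, rfl, rfl⟩
    rw [hl, cons_rem]
    exact h1

theorem good_silent : Good 0 SilentRoot := by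
  rintro _ _ ⟨p, t, u⟩ Γ k s L
  have := Ty_beta p p t u Γ k s L
  rwa [show Player.gamma p p = 0 by simp [Player.gamma]] at this

theorem good_inter : Good 1 InterRoot := by
  rintro _ _ ⟨p, t, u⟩ Γ k s L
  have := Ty_beta p p.op t u Γ k s L
  rwa [show Player.gamma p p.op = 1 by cases p <;> rfl] at this

theorem Good.spine {g : ℕ} {R : CTerm → CTerm → Prop} (hR : Good g R) : Good g (CSpine R) := by
  intro t u h
  induction h with
  | root h => exact hR _ _ h
  | appL q r _ ih =>
    intro Γ k s L
    constructor
    · rintro ⟨Γ₁, Γ₂, k₁, k₂, s₁, s₂, M, p, h1, h2, rfl, rfl, rfl⟩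
      obtain ⟨k₀, s₀, rfl, rfl, h⟩ := (ih _ _ _ _).1 h1
      exact ⟨k₀ + k₂ + Player.gamma p q, s₀ + s₂ + 1, by omega, by omega,
        _, _, _, _, _, _, _, _, h, h2, rfl, rfl, rfl⟩
    · rintro ⟨_, _, rfl, rfl, Γ₁, Γ₂, k₁, k₂, s₁, s₂, M, p, h1, h2, rfl, rfl, rfl⟩
      exact ⟨_, _, _, _, _, _, _, _, (ih _ _ _ _).2 ⟨_, _, rfl, rfl, h1⟩, h2, rfl,
        by omega, by omega⟩

theorem Good.head {g : ℕ} {R : CTerm → CTerm → Prop} (hR : Good g R) : Good g (CHead R) := by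
  intro t u h
  induction h with
  | spine h => exact hR.spine _ _ h
  | lam p _ ih =>
    intro Γ k s L
    constructor
    · rintro ⟨M, q, L', rfl, h⟩
      obtain ⟨k₀, s₀, rfl, rfl, h'⟩ := (ih _ _ _ _).1 h
      exact ⟨k₀, s₀, rfl, rfl, M, q, L', rfl, h'⟩
    · rintro ⟨k₀, s₀, rfl, rfl, M, q, L', rfl, h⟩
      exact ⟨M, q, L', rfl, (ih _ _ _ _).2 ⟨_, _, rfl, rfl, h⟩⟩

theorem Ty_correct (s : ℕ) : ∀ (t : CTerm) (Γ : TEnv) (k : ℕ) (L : LType), Ty t Γ k s L →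
    ∃ (h : CTerm) (n i : ℕ), h.HNF ∧ HRed t n i h ∧ n ≤ s ∧ i ≤ k := by
  induction s using Nat.strong_induction_on with
  | _ s ih =>
  intro t Γ k L ht
  by_cases hn : t.HNF
  · exact ⟨t, 0, 0, hn, HRed.refl t, by omega, by omega⟩
  · unfold CTerm.HNF at hn
    push Not at hn
    obtain ⟨u, hu | hu⟩ := hn
    · obtain ⟨k₀, s₀, rfl, rfl, h⟩ := (good_silent.head _ _ hu _ _ _ _).1 ht
      obtain ⟨h, n, i, h1, h2, h3, h4⟩ := ih s₀ (by omega) _ _ _ _ h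
      exact ⟨h, n + 1, i, h1, HRed.silent hu h2, by omega, by omega⟩
    · obtain ⟨k₀, s₀, rfl, rfl, h⟩ := (good_inter.head _ _ hu _ _ _ _).1 ht
      obtain ⟨h, n, i, h1, h2, h3, h4⟩ := ih s₀ (by omega) _ _ _ _ h
      exact ⟨h, n + 1, i + 1, h1, HRed.inter hu h2, by omega, by omega⟩

/-! ### Head normal forms are typable -/

theorem redex_step (p q : Player) (t u : CTerm) :
    SilentRoot (.app q (.lam p t) u) (t.subst 0 u) ∨
      InterRoot (.app q (.lam p t) u) (t.subst 0 u) := by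
  cases p <;> cases q
  · exact Or.inl (SilentRoot.beta .white t u)
  · exact Or.inr (InterRoot.beta .white t u)
  · exact Or.inr (InterRoot.beta .black t u)
  · exact Or.inl (SilentRoot.beta .black t u)

theorem neutral_typable (t : CTerm) : (∀ p r, t ≠ .lam p r) →
    (∀ u, ¬ CSpine SilentRoot t u) → (∀ u, ¬ CSpine InterRoot t u) →
    ∀ L, ∃ Γ k s, Ty t Γ k s L := by
  induction t with
  | var x => exact fun _ _ _ L => ⟨_, 0, 0, rfl, rfl, rfl⟩
  | lam p t => exact fun h => absurd rfl (h p t)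
  | app q t u iht _ =>
    intro _ h1 h2 L
    obtain ⟨Γ, k, s, h⟩ := iht (by
        rintro p r rfl
        rcases redex_step p q r u with h | h
        · exact h1 _ (CSpine.root h)
        · exact h2 _ (CSpine.root h))
      (fun v h => h1 _ (CSpine.appL q u h)) (fun v h => h2 _ (CSpine.appL q u h))
      (.arrow [] q q L)
    exact ⟨_, _, _, Γ, 0, k, 0, s, 0, [], q, h, Many.nil, rfl, rfl, rfl⟩

theorem hnf_typable (t : CTerm) : t.HNF → ∃ Γ k s L, Ty t Γ k s L := by
  have key : ∀ t : CTerm, (∀ p r, t ≠ .lam p r) → t.HNF → ∃ Γ k s L, Ty t Γ k s L := by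
    intro t h0 ht
    obtain ⟨Γ, k, s, h⟩ := neutral_typable t h0 (fun u h => ht u (Or.inl (CHead.spine h)))
      (fun u h => ht u (Or.inr (CHead.spine h))) .atom
    exact ⟨Γ, k, s, _, h⟩
  induction t with
  | var x => exact key _ (by simp)
  | app q t u => exact key _ (by simp)
  | lam p t ih =>
    intro ht
    obtain ⟨Γ, k, s, L, h⟩ := ih (by
      rintro u (h | h)
      · exact ht _ (Or.inl (CHead.lam p h))
      · exact ht _ (Or.inr (CHead.lam p h)))
    refine ⟨rem 0 Γ, k, s, _, (Γ 0).toList, p, L, rfl, ?_⟩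
    rw [Multiset.coe_toList, cons_rem]
    exact h

theorem HRed_typable {t h : CTerm} {n i : ℕ} (hr : HRed t n i h) (hh : h.HNF) :
    ∃ Γ k s L, Ty t Γ k s L := by
  induction hr with
  | refl t => exact hnf_typable t hh
  | silent st _ ih =>
    obtain ⟨Γ, k, s, L, h⟩ := ih hh
    exact ⟨Γ, _, _, L, (good_silent.head _ _ st _ _ _ _).2 ⟨k, s, rfl, rfl, h⟩⟩
  | inter st _ ih =>
    obtain ⟨Γ, k, s, L, h⟩ := ih hh
    exact ⟨Γ, _, _, L, (good_inter.head _ _ st _ _ _ _).2 ⟨k, s, rfl, rfl, h⟩⟩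

/-- Typability characterizes checkers head normalization. -/
theorem typability_characterizes_head_normalization :
    (∀ (Γ : TEnv) (k : ℕ) (t : CTerm) (L : LType) (π : Deriv Γ k t L),
      ∃ (h : CTerm) (n i : ℕ), h.HNF ∧ HRed t n i h ∧ n ≤ π.size ∧ i ≤ k) ∧
    (∀ (t h : CTerm) (n i : ℕ), HRed t n i h → h.HNF →
      ∃ (Γ : TEnv) (k : ℕ) (L : LType), Nonempty (Deriv Γ k t L)) ∧
    (∀ t : CTerm, CSem t ≠ ∅ ↔ ∃ (h : CTerm) (n i : ℕ), HRed t n i h ∧ h.HNF) := by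
  have c1 : ∀ (Γ : TEnv) (k : ℕ) (t : CTerm) (L : LType) (π : Deriv Γ k t L),
      ∃ (h : CTerm) (n i : ℕ), h.HNF ∧ HRed t n i h ∧ n ≤ π.size ∧ i ≤ k :=
    fun Γ k t L π => Ty_correct _ t Γ k L π.toTy
  have c2 : ∀ (t h : CTerm) (n i : ℕ), HRed t n i h → h.HNF →
      ∃ (Γ : TEnv) (k : ℕ) (L : LType), Nonempty (Deriv Γ k t L) := by
    intro t h n i hr hh
    obtain ⟨Γ, k, s, L, h⟩ := HRed_typable hr hh
    exact ⟨Γ, k, L, Ty.toDeriv t _ _ _ _ h⟩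
  refine ⟨c1, c2, fun t => ?_⟩
  rw [← Set.nonempty_iff_ne_empty]
  constructor
  · rintro ⟨⟨Γ, k, L⟩, ⟨π⟩⟩
    obtain ⟨h, n, i, h1, h2, _⟩ := c1 _ _ _ _ π
    exact ⟨h, n, i, h2, h1⟩
  · rintro ⟨h, n, i, h1, h2⟩
    obtain ⟨Γ, k, L, h⟩ := c2 _ _ _ _ h1 h2
    exact ⟨(Γ, k, L), h⟩
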